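/- arXiv:1902.10966 — 5 statements merged into one kernel-verified Lean document; each statement's English description precedes it below -/
import Mathlib

section
/- Fix a selection function assigning to each c ∈ ℝ^d and each j ∈ {1,…,N} a point p_j(c) ∈ P_j with ‖c − p_j(c)‖ = m(c,P_j), and set g̃(c,j) = (c − p_j(c))/‖c − p_j(c)‖ if c ≠ p_j(c) and g̃(c,j) = 0 otherwise. Let c* be a minimizer of f over ℝ^d, let c_0 ∈ ℝ^d, R = ‖c_0 − c*‖, s > 0, and ℓ ∈ ℕ. For each index sequence ω = (j_1,…,j_ℓ) ∈ {1,…,N}^ℓ define iterates c_0(ω) = c_0 and c_i(ω) = c_{i−1}(ω) − s·g̃(c_{i−1}(ω), j_i) for i = 1,…,ℓ. Then the average over the N^ℓ sequences ω, with the uniform distribution on {1,…,N}^ℓ, of min_{0 ≤ i ≤ ℓ} f(c_i(ω)) − f(c*) is at most N·(R² + (ℓ+1)·s²)/(2·(ℓ+1)·s). -/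
/-!
The map `g = gt c j` is a subgradient of `mmax · (P j)` at `c` of norm at most `1`, because the
distance to the farthest point `sel c j` is convex and bounded above by `mmax · (P j)`
(`mmax_subgradient`). Expanding the square, a step from `c` in a uniformly random direction `j`
lowers the squared distance to `cstar` by at least `(2 * s / N) * (f c - f cstar) - s ^ 2` on
average (`sum_sq_step_le`). The iterate `iter ω i` depends only on the first `i` indices, so the
index `ω i` may be resampled without changing it (`sum_sum_update`), and the average decrease
applies to every step. Telescoping over the `ℓ` steps, and using one more, virtual, step from the
last iterate (whose squared distance afterwards is nonnegative), bounds the sum over all `ℓ + 1`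
iterates of the expected gap by `N * (R ^ 2 + (ℓ + 1) * s ^ 2) / (2 * s)`; the minimum gap is at
most the mean gap.
-/

open scoped Classical

/-- `mmax c P hP` is the maximum Euclidean distance from the center `c`
to a point of the finite nonempty set `P`. -/
noncomputable def mmax {d : ℕ} (c : EuclideanSpace ℝ (Fin d))
    (P : Finset (EuclideanSpace ℝ (Fin d))) (hP : P.Nonempty) : ℝ :=
  P.sup' hP fun p => ‖c - p‖

/-- The unit vector pointing from a farthest point `p` of `P` to `c` (or `0` if `c = p`) is a
subgradient of `mmax · P` at `c`, evaluated against the point `y`,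
and has norm at most `1`. -/
theorem mmax_subgradient {d : ℕ} (P : Finset (EuclideanSpace ℝ (Fin d))) (hP : P.Nonempty)
    (c p y g : EuclideanSpace ℝ (Fin d)) (hp : p ∈ P) (hmax : ‖c - p‖ = mmax c P hP)
    (hg : g = if c = p then 0 else ‖c - p‖⁻¹ • (c - p)) :
    mmax c P hP - mmax y P hP ≤ inner ℝ (c - y) g ∧ ‖g‖ ≤ 1 := by
  have hy : ‖y - p‖ ≤ mmax y P hP := Finset.le_sup' (fun p => ‖y - p‖) hp
  rw [← hmax]
  by_cases h : c = p
  · subst h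
    have := norm_nonneg (y - c)
    simp only [if_true] at hg
    subst hg
    simp only [sub_self, norm_zero, inner_zero_right]
    constructor <;> linarith
  · rw [if_neg h] at hg
    have h0 : ‖c - p‖ ≠ 0 := norm_ne_zero_iff.mpr (sub_ne_zero.mpr h)
    have hg1 : ‖g‖ = 1 := by
      rw [hg, norm_smul, norm_inv, norm_norm, inv_mul_cancel₀ h0]
    refine ⟨?_, hg1.le⟩
    have h1 : inner ℝ (c - p) g = ‖c - p‖ := by
      rw [hg, inner_smul_right, real_inner_self_eq_norm_sq]
      field_simp
    have h2 : inner ℝ (y - p) g ≤ ‖y - p‖ := by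
      simpa [hg1] using real_inner_le_norm (y - p) g
    have h3 : inner ℝ (c - y) g = inner ℝ (c - p) g - inner ℝ (y - p) g := by
      rw [← inner_sub_left]
      congr 1
      abel
    linarith

/-- Expected decrease of the squared distance to `y` in one step from `c`, multiplied by `N`.
Here `g j` plays the role of a subgradient at `c` of a function with value `m₁ j` at `c` and `m₂ j`
at `y`. -/
theorem sum_sq_step_le {d N : ℕ} (m₁ m₂ : Fin N → ℝ) (c y : EuclideanSpace ℝ (Fin d))
    (g : Fin N → EuclideanSpace ℝ (Fin d)) (s : ℝ) (hs : 0 < s)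
    (hg : ∀ j, m₁ j - m₂ j ≤ inner ℝ (c - y) (g j) ∧ ‖g j‖ ≤ 1) :
    ∑ j, ‖c - s • g j - y‖ ^ 2 ≤
      N * ‖c - y‖ ^ 2 - 2 * s * (∑ j, m₁ j - ∑ j, m₂ j) + N * s ^ 2 := by
  have key : ∀ j, ‖c - s • g j - y‖ ^ 2 ≤
      ‖c - y‖ ^ 2 - 2 * s * (m₁ j - m₂ j) + s ^ 2 := by
    intro j
    obtain ⟨h1, h2⟩ := hg j
    have h3 : c - s • g j - y = (c - y) - s • g j := by abel
    rw [h3, norm_sub_sq_real, inner_smul_right, norm_smul, mul_pow, Real.norm_eq_abs, sq_abs]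
    have h4 : ‖g j‖ ^ 2 ≤ 1 := pow_le_one₀ (norm_nonneg _) h2
    nlinarith [mul_le_mul_of_nonneg_left h1 hs.le, mul_le_mul_of_nonneg_left h4 (sq_nonneg s)]
  refine (Finset.sum_le_sum fun j _ => key j).trans_eq ?_
  rw [Finset.sum_add_distrib, Finset.sum_sub_distrib, ← Finset.mul_sum, Finset.sum_sub_distrib]
  simp

/-- Resampling the coordinate `i` of a uniformly random sequence does not change its law. -/
theorem sum_sum_update {N ℓ : ℕ} (i : Fin ℓ) (F : (Fin ℓ → Fin N) → ℝ) :
    ∑ ω, ∑ j, F (Function.update ω i j) = N * ∑ ω, F ω := by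
  -- The map `(ω, j) ↦ (update ω i j, ω i)` is an involution.
  have hinv : Function.Involutive
      (fun x : (Fin ℓ → Fin N) × Fin N => (Function.update x.1 i x.2, x.1 i)) := by
    rintro ⟨ω, j⟩
    simp
  have h := Equiv.sum_comp hinv.toPerm (fun x => F x.1)
  simp only [Function.Involutive.coe_toPerm, Fintype.sum_prod_type] at h
  rw [h]
  simp [Finset.mul_sum]

theorem sum_inf'_sub_le {Ω : Type*} [Fintype Ω] (ℓ : ℕ) (a : Ω → ℕ → ℝ) (b : ℝ) :
    ((ℓ : ℝ) + 1) * ∑ ω, ((Finset.range (ℓ + 1)).inf'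
      (Finset.nonempty_range_iff.mpr (Nat.succ_ne_zero ℓ)) (fun i => a ω i) - b) ≤
      ∑ i ∈ Finset.range (ℓ + 1), ∑ ω, (a ω i - b) := by
  have h : ∀ i ∈ Finset.range (ℓ + 1), ∑ ω, ((Finset.range (ℓ + 1)).inf'
      (Finset.nonempty_range_iff.mpr (Nat.succ_ne_zero ℓ)) (fun i => a ω i) - b) ≤
        ∑ ω, (a ω i - b) :=
    fun i hi => Finset.sum_le_sum fun ω _ =>
      sub_le_sub_right (Finset.inf'_le (fun i => a ω i) hi) _
  have hcount := Finset.card_nsmul_le_sum _ _ _ h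
  rw [Finset.card_range, nsmul_eq_mul] at hcount
  push_cast at hcount
  exact hcount

/-- Telescoping of the recursion `a (k + 1) ≤ a k - t * b k + e`, where the step out of `a ℓ` is
only known to end at a nonnegative value. -/
theorem telescope_le (ℓ : ℕ) (a b : ℕ → ℝ) (t e : ℝ)
    (hstep : ∀ k < ℓ, a (k + 1) ≤ a k - t * b k + e) (hlast : 0 ≤ a ℓ - t * b ℓ + e) :
    t * ∑ i ∈ Finset.range (ℓ + 1), b i ≤ a 0 + ((ℓ : ℝ) + 1) * e := by
  have h : ∀ k ≤ ℓ, a k + t * ∑ i ∈ Finset.range k, b i ≤ a 0 + k * e := by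
    intro k
    induction k with
    | zero => simp
    | succ k ih =>
      intro hk
      have h1 := ih (by omega)
      have h2 := hstep k hk
      rw [Finset.sum_range_succ]
      push_cast
      linarith
  have h1 := h ℓ le_rfl
  rw [Finset.sum_range_succ]
  linarith

/-- Guarantee for the stochastic subgradient method run for `ℓ` iterations with
fixed step size `s` from the initial center `c₀`: the expectation, over the
uniformly random index sequence `ω ∈ {1,…,N}^ℓ`, of
`min_{0 ≤ i ≤ ℓ} f(c_i(ω)) - f(c*)` is at most
`N·(R² + (ℓ+1)·s²)/(2·(ℓ+1)·s)`, where `R = ‖c₀ - c*‖`. -/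
theorem stochastic_subgradient_method {d N : ℕ} (hN : 0 < N)
    (P : Fin N → Finset (EuclideanSpace ℝ (Fin d))) (hP : ∀ i, (P i).Nonempty)
    (sel : EuclideanSpace ℝ (Fin d) → Fin N → EuclideanSpace ℝ (Fin d))
    (hsel_mem : ∀ c j, sel c j ∈ P j)
    (hsel_max : ∀ c j, ‖c - sel c j‖ = mmax c (P j) (hP j))
    (gt : EuclideanSpace ℝ (Fin d) → Fin N → EuclideanSpace ℝ (Fin d))
    (hgt : ∀ c j, gt c j =
      if c = sel c j then 0 else ‖c - sel c j‖⁻¹ • (c - sel c j))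
    (cstar : EuclideanSpace ℝ (Fin d))
    (hcstar : ∀ y, (∑ i, mmax cstar (P i) (hP i)) ≤ ∑ i, mmax y (P i) (hP i))
    (c0 : EuclideanSpace ℝ (Fin d)) (R : ℝ) (hR : R = ‖c0 - cstar‖)
    (s : ℝ) (hs : 0 < s) (ℓ : ℕ)
    (iter : (Fin ℓ → Fin N) → ℕ → EuclideanSpace ℝ (Fin d))
    (hiter0 : ∀ ω, iter ω 0 = c0)
    (hiterS : ∀ ω (i : Fin ℓ),
      iter ω ((i : ℕ) + 1) = iter ω (i : ℕ) - s • gt (iter ω (i : ℕ)) (ω i)) :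
    (1 / (N : ℝ) ^ ℓ) *
        ∑ ω : Fin ℓ → Fin N,
          (((Finset.range (ℓ + 1)).inf'
              (Finset.nonempty_range_iff.mpr (Nat.succ_ne_zero ℓ))
              fun i => ∑ k, mmax (iter ω i) (P k) (hP k)) -
            ∑ k, mmax cstar (P k) (hP k)) ≤
      (N : ℝ) * (R ^ 2 + ((ℓ : ℝ) + 1) * s ^ 2) / (2 * ((ℓ : ℝ) + 1) * s) := by
  -- The iterate `iter ω k` does not depend on the indices of later steps.
  have hindep : ∀ (i : Fin ℓ) (ω : Fin ℓ → Fin N) (j : Fin N) (k : ℕ), k ≤ i →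
      iter (Function.update ω i j) k = iter ω k := by
    intro i ω j k
    induction k with
    | zero => intro _; rw [hiter0, hiter0]
    | succ k ih =>
      intro hk
      have hkℓ : k < ℓ := by omega
      have hne : (⟨k, hkℓ⟩ : Fin ℓ) ≠ i := by
        intro h
        have := congrArg Fin.val h
        simp only at this
        omega
      have h1 := hiterS (Function.update ω i j) ⟨k, hkℓ⟩
      have h2 := hiterS ω ⟨k, hkℓ⟩
      simp only at h1 h2
      rw [h1, h2, ih (by omega), Function.update_of_ne hne]
  have hstep : ∀ c, ∑ j, ‖c - s • gt c j - cstar‖ ^ 2 ≤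
      N * ‖c - cstar‖ ^ 2 -
        2 * s * (∑ k, mmax c (P k) (hP k) - ∑ k, mmax cstar (P k) (hP k)) + N * s ^ 2 :=
    fun c => sum_sq_step_le _ _ c cstar (gt c) s hs fun j =>
      mmax_subgradient (P j) (hP j) c (sel c j) cstar (gt c j) (hsel_mem c j) (hsel_max c j)
        (hgt c j)
  set f : EuclideanSpace ℝ (Fin d) → ℝ := fun c => ∑ k, mmax c (P k) (hP k) with hf
  change ∀ c, _ ≤ N * ‖c - cstar‖ ^ 2 - 2 * s * (f c - f cstar) + N * s ^ 2 at hstep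
  change (1 / (N : ℝ) ^ ℓ) * ∑ ω : Fin ℓ → Fin N,
    ((Finset.range (ℓ + 1)).inf' _ (fun i => f (iter ω i)) - f cstar) ≤ _
  have hcard : ∀ a : ℝ, ∑ _ω : Fin ℓ → Fin N, a = (N : ℝ) ^ ℓ * a := by
    intro a
    simp
  have hsumstep : ∀ k : ℕ, ∑ ω, ∑ j, ‖iter ω k - s • gt (iter ω k) j - cstar‖ ^ 2 ≤
      N * ∑ ω, ‖iter ω k - cstar‖ ^ 2 - 2 * s * ∑ ω, (f (iter ω k) - f cstar) +
        (N : ℝ) ^ ℓ * (N * s ^ 2) := by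
    intro k
    refine (Finset.sum_le_sum fun ω _ => hstep (iter ω k)).trans_eq ?_
    rw [Finset.sum_add_distrib, Finset.sum_sub_distrib, ← Finset.mul_sum, ← Finset.mul_sum, hcard]
  have htotal := telescope_le ℓ (fun k => N * ∑ ω, ‖iter ω k - cstar‖ ^ 2)
    (fun k => ∑ ω, (f (iter ω k) - f cstar)) (2 * s) ((N : ℝ) ^ ℓ * (N * s ^ 2))
    (by
      intro k hk
      refine le_trans (le_of_eq ?_) (hsumstep k)
      have hup := sum_sum_update (⟨k, hk⟩ : Fin ℓ) (fun ω => ‖iter ω (k + 1) - cstar‖ ^ 2)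
      refine hup.symm.trans (Finset.sum_congr rfl fun ω _ => Finset.sum_congr rfl fun j _ => ?_)
      have h1 := hiterS (Function.update ω ⟨k, hk⟩ j) ⟨k, hk⟩
      rw [Function.update_self, hindep ⟨k, hk⟩ ω j k le_rfl] at h1
      exact congrArg (fun x => ‖x - cstar‖ ^ 2) h1)
    -- The virtual step from `iter ω ℓ` ends at a nonnegative squared distance.
    (le_trans (Finset.sum_nonneg fun ω _ => Finset.sum_nonneg fun j _ => sq_nonneg _)
      (hsumstep ℓ))
  simp only [hiter0, ← hR, hcard] at htotal
  have hmin := sum_inf'_sub_le ℓ (fun ω i => f (iter ω i)) (f cstar)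
  have hNℓ : (0 : ℝ) < (N : ℝ) ^ ℓ := by positivity
  rw [le_div_iff₀ (by positivity), one_div, mul_assoc, inv_mul_le_iff₀ hNℓ]
  have hle := (mul_le_mul_of_nonneg_left hmin (by positivity : 0 ≤ 2 * s)).trans htotal
  generalize ∑ ω : Fin ℓ → Fin N, ((Finset.range (ℓ + 1)).inf' _ _ - f cstar) = S at hle ⊢
  linarith
end

section
/- Let 0 < ε < 1/9, let N ≥ 1, let c* be a minimizer of f over ℝ^d with f(c*) > 0, and set Δ = f(c*)/N. Let c_0 ∈ ℝ^d and suppose that at least (1 − 3ε)·N of the sets P_i are entirely contained in the closed ball B(c_0, ε·Δ). Then ‖c_0 − c*‖ ≤ 4·ε·Δ. -/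
/-! The minimality of `c*` is tested against `c₀`. Write `D = ‖c₀ - c*‖`. Passing from `c*` to `c₀`
raises `m(·, P i)` by at most `D` for every `i`, and lowers it by at least `D - 2εΔ` when `P i` lies
in `B(c₀, εΔ)`. If `k` sets lie in that ball, `f(c*) ≤ f(c₀)` gives `D (2k - N) ≤ 2kεΔ`. As
`k ≥ (1 - 3ε) N > 2N/3`, we have `2k - N > 0` and `2k ≤ 4 (2k - N)`, so `D ≤ 4εΔ`. -/

open scoped Classical

theorem mmax_le_add {d : ℕ} (a b : EuclideanSpace ℝ (Fin d))
    (P : Finset (EuclideanSpace ℝ (Fin d))) (hP : P.Nonempty) :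
    mmax a P hP ≤ mmax b P hP + ‖a - b‖ := by
  refine Finset.sup'_le hP _ fun p hp => ?_
  have h1 : ‖b - p‖ ≤ mmax b P hP := Finset.le_sup' (fun p => ‖b - p‖) hp
  have h2 := norm_sub_le_norm_sub_add_norm_sub a b p
  linarith

theorem mmax_le_of_subset_closedBall {d : ℕ} (a b : EuclideanSpace ℝ (Fin d))
    (P : Finset (EuclideanSpace ℝ (Fin d))) (hP : P.Nonempty) (r : ℝ)
    (h : (P : Set (EuclideanSpace ℝ (Fin d))) ⊆ Metric.closedBall a r) :
    mmax a P hP ≤ mmax b P hP + (2 * r - ‖a - b‖) := by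
  have hr : ∀ p ∈ P, ‖a - p‖ ≤ r := fun p hp => by
    simpa [dist_eq_norm, norm_sub_rev] using h (Finset.mem_coe.2 hp)
  have ha : mmax a P hP ≤ r := Finset.sup'_le hP _ hr
  obtain ⟨p, hp⟩ := hP
  have h1 : ‖b - p‖ ≤ mmax b P ⟨p, hp⟩ := Finset.le_sup' (fun p => ‖b - p‖) hp
  have h2 := norm_sub_le_norm_sub_add_norm_sub a p b
  have h3 := hr p hp
  rw [norm_sub_rev p b] at h2
  linarith

/-- If at least `(1 - 3ε)·N` of the sets `P i` are contained in the closed ball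
`B(c₀, ε·Δ)`, where `Δ = f(c*)/N`, then `‖c₀ - c*‖ ≤ 4·ε·Δ`. -/
theorem initial_center_close {d N : ℕ} (hN : 1 ≤ N)
    (P : Fin N → Finset (EuclideanSpace ℝ (Fin d))) (hP : ∀ i, (P i).Nonempty)
    (ε : ℝ) (hε0 : 0 < ε) (hε1 : ε < 1 / 9)
    (cstar : EuclideanSpace ℝ (Fin d))
    (hcstar : ∀ y, (∑ i, mmax cstar (P i) (hP i)) ≤ ∑ i, mmax y (P i) (hP i))
    (hpos : 0 < ∑ i, mmax cstar (P i) (hP i))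
    (Δ : ℝ) (hΔ : Δ = (∑ i, mmax cstar (P i) (hP i)) / N)
    (c0 : EuclideanSpace ℝ (Fin d))
    (hmany : (1 - 3 * ε) * N ≤
      ((Finset.univ.filter fun i : Fin N =>
          (P i : Set (EuclideanSpace ℝ (Fin d))) ⊆
            Metric.closedBall c0 (ε * Δ)).card : ℝ)) :
    ‖c0 - cstar‖ ≤ 4 * ε * Δ := by
  have hN0 : (0 : ℝ) < N := by exact_mod_cast hN
  have hΔ0 : 0 < Δ := hΔ ▸ div_pos hpos hN0
  set G := Finset.univ.filter fun i : Fin N =>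
    (P i : Set (EuclideanSpace ℝ (Fin d))) ⊆ Metric.closedBall c0 (ε * Δ) with hG
  set D := ‖c0 - cstar‖ with hD
  have hterm : ∀ i, mmax c0 (P i) (hP i) ≤
      mmax cstar (P i) (hP i) + (D + if i ∈ G then 2 * (ε * Δ) - 2 * D else 0) := by
    intro i
    split_ifs with hi
    · have := mmax_le_of_subset_closedBall c0 cstar (P i) (hP i) (ε * Δ)
        (Finset.mem_filter.1 hi).2
      linarith
    · simpa using mmax_le_add c0 cstar (P i) (hP i)
  have hsum := (hcstar c0).trans (Finset.sum_le_sum fun i _ => hterm i)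
  rw [Finset.sum_add_distrib, Finset.sum_add_distrib, Finset.sum_ite_mem, Finset.univ_inter] at hsum
  simp only [Finset.sum_const, Finset.card_univ, Fintype.card_fin, nsmul_eq_mul] at hsum
  have hk : 2 * (N : ℝ) < 3 * G.card := by nlinarith
  by_contra! hlt
  have hεΔ : 0 < ε * Δ := mul_pos hε0 hΔ0
  have h1 : 0 < (D - 4 * (ε * Δ)) * (2 * G.card - N) := mul_pos (by linarith) (by linarith)
  have h2 : 0 < ε * Δ * (3 * G.card - 2 * N) := mul_pos hεΔ (by linarith)
  linarith
end

section
/- Let ε > 0 and let b, ĉ ∈ ℝ^d satisfy Σ_{i=1}^N m(b, P_i) > (1+ε)·Σ_{i=1}^N m(ĉ, P_i). Then Σ_{i=1}^N ( m(b, P_i) − m(ĉ, P_i) ) > (ε/(2+ε))·N·‖ĉ − b‖. -/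
/-- Any point of `P` witnesses this: its distances to the two centers already sum to at least
the distance between the centers. -/
theorem norm_sub_le_mmax_add_mmax {d : ℕ} (b c : EuclideanSpace ℝ (Fin d))
    (P : Finset (EuclideanSpace ℝ (Fin d))) (hP : P.Nonempty) :
    ‖c - b‖ ≤ mmax b P hP + mmax c P hP := by
  obtain ⟨p, hp⟩ := id hP
  have hb : ‖b - p‖ ≤ mmax b P hP := Finset.le_sup' (fun p => ‖b - p‖) hp
  have hc : ‖c - p‖ ≤ mmax c P hP := Finset.le_sup' (fun p => ‖c - p‖) hp
  have htri := norm_sub_le_norm_sub_add_norm_sub c p b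
  rw [norm_sub_rev p b] at htri
  linarith

/-- If `∑ i, m(b, P i) > (1+ε)·∑ i, m(ĉ, P i)`, then
`∑ i, (m(b, P i) - m(ĉ, P i)) > (ε/(2+ε))·N·‖ĉ - b‖`. -/
theorem bad_center_gap {d N : ℕ}
    (P : Fin N → Finset (EuclideanSpace ℝ (Fin d))) (hP : ∀ i, (P i).Nonempty)
    (ε : ℝ) (hε : 0 < ε) (b chat : EuclideanSpace ℝ (Fin d))
    (hbad : (1 + ε) * ∑ i, mmax chat (P i) (hP i) < ∑ i, mmax b (P i) (hP i)) :
    (ε / (2 + ε)) * N * ‖chat - b‖ <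
      ∑ i, (mmax b (P i) (hP i) - mmax chat (P i) (hP i)) := by
  have hsum : (N : ℝ) * ‖chat - b‖ ≤
      ∑ i, mmax b (P i) (hP i) + ∑ i, mmax chat (P i) (hP i) := by
    rw [← Finset.sum_add_distrib]
    simpa using Finset.sum_le_sum fun i (_ : i ∈ Finset.univ) =>
      norm_sub_le_mmax_add_mmax b chat (P i) (hP i)
  rw [Finset.sum_sub_distrib, mul_assoc, div_mul_eq_mul_div, div_lt_iff₀ (by linarith)]
  have hscaled := mul_le_mul_of_nonneg_left hsum hε.le
  linarith
end

section
/- Let 0 < ε < 1, let P_1, …, P_N be finite nonempty subsets of ℝ^d, let 𝒞 be a finite nonempty set of candidate centers in ℝ^d, and let ĉ ∈ 𝒞 minimize Σ_{i=1}^N m(c, P_i) over c ∈ 𝒞. Let k ∈ ℕ and consider a uniformly random sample with repetition, i.e., ω = (j_1,…,j_k) uniform on {1,…,N}^k. Suppose a : {1,…,N}^k → 𝒞 is any function such that a(ω) minimizes the empirical cost Σ_{t=1}^k m(c, P_{j_t}) over c ∈ 𝒞 for every ω. Then the probability (over uniform ω) that Σ_{i=1}^N m(a(ω), P_i) > (1+ε)·Σ_{i=1}^N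 m(ĉ, P_i) is at most |𝒞|·exp(−ε²·k/64). -/
/-!
Fix a candidate `c` and let `D = ‖c - ĉ‖`. By the triangle inequality the difference
`m(c, P_i) - m(ĉ, P_i)` lies in `[-D, D]`, while `m(c, P_i) + m(ĉ, P_i) ≥ D` for every `i`
(`norm_sub_le_mmax_add`). If `c` costs more than `(1 + ε)` times the optimum, the second bound
says that the optimum cannot be large compared with the excess of `c`, so the normalised difference
`x i = (m(c, P_i) - m(ĉ, P_i)) / D ∈ [-1, 1]` has mean at least `ε / (2 + ε) ≥ ε / 3`.

The sample can select `c` only if `∑ t, x (ω t) ≤ 0`, and an exponential-moment (Chernoff) bound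
gives this event probability at most `exp (-ε² k / 36)` (`card_sum_nonpos_le`). A union bound over
the candidates finishes the proof, with `36` in place of `64`.
-/

open scoped Classical

lemma mmax_nonneg {d : ℕ} (c : EuclideanSpace ℝ (Fin d))
    (P : Finset (EuclideanSpace ℝ (Fin d))) (hP : P.Nonempty) : 0 ≤ mmax c P hP := by
  obtain ⟨p, hp⟩ := hP
  exact (norm_nonneg (c - p)).trans (Finset.le_sup' (fun p => ‖c - p‖) hp)

lemma mmax_le_norm_sub_add {d : ℕ} (c c' : EuclideanSpace ℝ (Fin d))
    (P : Finset (EuclideanSpace ℝ (Fin d))) (hP : P.Nonempty) :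
    mmax c P hP ≤ ‖c - c'‖ + mmax c' P hP := by
  refine Finset.sup'_le hP _ fun p hp => ?_
  have h1 : ‖c' - p‖ ≤ mmax c' P hP := Finset.le_sup' (fun p => ‖c' - p‖) hp
  have h2 := norm_sub_le_norm_sub_add_norm_sub c c' p
  linarith

lemma norm_sub_le_mmax_add {d : ℕ} (c c' : EuclideanSpace ℝ (Fin d))
    (P : Finset (EuclideanSpace ℝ (Fin d))) (hP : P.Nonempty) :
    ‖c - c'‖ ≤ mmax c P hP + mmax c' P hP := by
  have hP' := hP
  obtain ⟨p, hp⟩ := hP'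
  have h1 : ‖c - p‖ ≤ mmax c P hP := Finset.le_sup' (fun p => ‖c - p‖) hp
  have h2 : ‖c' - p‖ ≤ mmax c' P hP := Finset.le_sup' (fun p => ‖c' - p‖) hp
  have h3 := norm_sub_le_norm_sub_add_norm_sub c p c'
  rw [norm_sub_rev p c'] at h3
  linarith

/-- Chernoff bound, in counting form: if `x` takes values in `[-1, 1]` and has mean at least
`ε / 3`, then few index sequences have a nonpositive sum. -/
lemma card_sum_nonpos_le {N : ℕ} (x : Fin N → ℝ) (hx : ∀ i, |x i| ≤ 1) (ε : ℝ)
    (hε0 : 0 < ε) (hε1 : ε < 1) (hsum : N * (ε / 3) ≤ ∑ i, x i) (k : ℕ) :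
    ((Finset.univ.filter fun ω : Fin k → Fin N => ∑ t, x (ω t) ≤ 0).card : ℝ) ≤
      (N : ℝ) ^ k * Real.exp (-(ε ^ 2 * k) / 36) := by
  -- `s = ε / 6` minimises the exponent `-s * (ε / 3) + s ^ 2`.
  set s : ℝ := ε / 6 with hs
  have hmgf : ∑ i, Real.exp (-s * x i) ≤ N * Real.exp (-ε ^ 2 / 36) := by
    have hpt : ∀ i, Real.exp (-s * x i) ≤ 1 - s * x i + s ^ 2 := by
      intro i
      have habs : |-s * x i| ≤ s := by
        rw [abs_mul, abs_neg, abs_of_pos (by positivity : 0 < s)]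
        exact mul_le_of_le_one_right (by positivity) (hx i)
      have h1 := (abs_le.1 (Real.abs_exp_sub_one_sub_id_le (x := -s * x i) (by linarith))).2
      have h2 : (-s * x i) ^ 2 ≤ s ^ 2 := sq_le_sq' (by linarith [(abs_le.1 habs).1])
        (abs_le.1 habs).2
      linarith
    calc ∑ i, Real.exp (-s * x i) ≤ ∑ i, (1 - s * x i + s ^ 2) :=
          Finset.sum_le_sum fun i _ => hpt i
      _ = N * (1 + s ^ 2) - s * ∑ i, x i := by
          simp only [Finset.sum_add_distrib, Finset.sum_sub_distrib, ← Finset.mul_sum]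
          simp
          ring
      _ ≤ N * (1 + s ^ 2) - s * (N * (ε / 3)) := by gcongr
      _ = N * (-ε ^ 2 / 36 + 1) := by rw [hs]; ring
      _ ≤ N * Real.exp (-ε ^ 2 / 36) := by gcongr; exact Real.add_one_le_exp _
  calc ((Finset.univ.filter fun ω : Fin k → Fin N => ∑ t, x (ω t) ≤ 0).card : ℝ)
      = ∑ ω : Fin k → Fin N with ∑ t, x (ω t) ≤ 0, (1 : ℝ) := by simp
    _ ≤ ∑ ω : Fin k → Fin N with ∑ t, x (ω t) ≤ 0, ∏ t, Real.exp (-s * x (ω t)) := by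
        refine Finset.sum_le_sum fun ω hω => ?_
        rw [← Real.exp_sum, ← Finset.mul_sum, Real.one_le_exp_iff]
        have := (Finset.mem_filter.1 hω).2
        have hs0 : 0 < s := by positivity
        nlinarith
    _ ≤ ∑ ω : Fin k → Fin N, ∏ t, Real.exp (-s * x (ω t)) :=
        Finset.sum_le_sum_of_subset_of_nonneg (Finset.filter_subset _ _)
          fun ω _ _ => Finset.prod_nonneg fun t _ => (Real.exp_pos _).le
    _ = (∑ i, Real.exp (-s * x i)) ^ k := by
        rw [Fintype.sum_pow (fun i => Real.exp (-s * x i)) k]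
    _ ≤ (N * Real.exp (-ε ^ 2 / 36)) ^ k :=
        pow_le_pow_left₀ (Finset.sum_nonneg fun i _ => (Real.exp_pos _).le) hmgf k
    _ = (N : ℝ) ^ k * Real.exp (-(ε ^ 2 * k) / 36) := by
        rw [mul_pow, ← Real.exp_nat_mul]
        congr 2
        ring

/-- A center `c` that is not a `(1 + ε)`-approximation of `c'` beats `c'` on few samples. The
point `c'` need not be optimal. -/
lemma card_empirical_le {d N : ℕ}
    (P : Fin N → Finset (EuclideanSpace ℝ (Fin d))) (hP : ∀ i, (P i).Nonempty)
    (ε : ℝ) (hε0 : 0 < ε) (hε1 : ε < 1) (c c' : EuclideanSpace ℝ (Fin d))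
    (hbad : (1 + ε) * ∑ i, mmax c' (P i) (hP i) < ∑ i, mmax c (P i) (hP i)) (k : ℕ) :
    ((Finset.univ.filter fun ω : Fin k → Fin N =>
        ∑ t, mmax c (P (ω t)) (hP (ω t)) ≤ ∑ t, mmax c' (P (ω t)) (hP (ω t))).card : ℝ) ≤
      (N : ℝ) ^ k * Real.exp (-(ε ^ 2 * k) / 36) := by
  have hA : 0 ≤ ∑ i, mmax c' (P i) (hP i) := Finset.sum_nonneg fun i _ => mmax_nonneg _ _ _
  have hne : c ≠ c' := by
    rintro rfl
    nlinarith
  have hD : 0 < ‖c - c'‖ := norm_pos_iff.2 (sub_ne_zero.2 hne)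
  have hx : ∀ i, |(mmax c (P i) (hP i) - mmax c' (P i) (hP i)) / ‖c - c'‖| ≤ 1 := by
    intro i
    rw [abs_div, abs_of_pos hD, div_le_one hD, abs_le]
    have h1 := mmax_le_norm_sub_add c c' (P i) (hP i)
    have h2 := mmax_le_norm_sub_add c' c (P i) (hP i)
    rw [norm_sub_rev] at h2
    constructor <;> linarith
  have hAB : N * ‖c - c'‖ ≤ ∑ i, mmax c (P i) (hP i) + ∑ i, mmax c' (P i) (hP i) := by
    rw [← Finset.sum_add_distrib]
    calc N * ‖c - c'‖ = ∑ _i : Fin N, ‖c - c'‖ := by simp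
      _ ≤ _ := Finset.sum_le_sum fun i _ => norm_sub_le_mmax_add c c' (P i) (hP i)
  have hsum : N * (ε / 3) ≤
      ∑ i, (mmax c (P i) (hP i) - mmax c' (P i) (hP i)) / ‖c - c'‖ := by
    rw [← Finset.sum_div, Finset.sum_sub_distrib, le_div_iff₀ hD]
    -- With `A`, `B` the costs of `c'`, `c`: `ε N D ≤ ε (A + B) = 2 ε A + ε (B - A) ≤ 3 (B - A)`.
    have h1 := mul_le_mul_of_nonneg_left hAB hε0.le
    have h2 : 0 ≤ ε * ∑ i, mmax c' (P i) (hP i) := by positivity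
    have h3 := mul_le_mul_of_nonneg_right hε1.le (sub_nonneg.2
      (show ∑ i, mmax c' (P i) (hP i) ≤ ∑ i, mmax c (P i) (hP i) by linarith))
    linarith
  refine le_trans (Nat.cast_le.2 (Finset.card_le_card fun ω hω => ?_))
    (card_sum_nonpos_le _ hx ε hε0 hε1 hsum k)
  simp only [Finset.mem_filter, Finset.mem_univ, true_and] at hω ⊢
  rw [← Finset.sum_div, Finset.sum_sub_distrib]
  exact div_nonpos_of_nonpos_of_nonneg (by linarith) hD.le

/-- Indyk–Thorup sampling theorem for the set median setting: if `ĉ ∈ 𝒞`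
minimizes the full cost over `𝒞` and, for every index sequence `ω ∈ {1,…,N}^k`,
`a(ω) ∈ 𝒞` minimizes the empirical cost on the sample `ω` over `𝒞`, then the
probability over uniform `ω` that `a(ω)` is not a `(1+ε)`-approximation of `ĉ`
is at most `|𝒞|·exp(-ε²·k/64)`. -/
theorem sampling_theorem {d N : ℕ} (hN : 0 < N)
    (P : Fin N → Finset (EuclideanSpace ℝ (Fin d))) (hP : ∀ i, (P i).Nonempty)
    (ε : ℝ) (hε0 : 0 < ε) (hε1 : ε < 1)
    (C : Finset (EuclideanSpace ℝ (Fin d))) (hC : C.Nonempty)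
    (chat : EuclideanSpace ℝ (Fin d)) (hchat_mem : chat ∈ C)
    (hchat_min : ∀ c ∈ C,
      (∑ i, mmax chat (P i) (hP i)) ≤ ∑ i, mmax c (P i) (hP i))
    (k : ℕ) (a : (Fin k → Fin N) → EuclideanSpace ℝ (Fin d))
    (ha_mem : ∀ ω, a ω ∈ C)
    (ha_min : ∀ ω, ∀ c ∈ C,
      (∑ t, mmax (a ω) (P (ω t)) (hP (ω t))) ≤ ∑ t, mmax c (P (ω t)) (hP (ω t))) :
    (1 / (N : ℝ) ^ k) *
        ((Finset.univ.filter fun ω : Fin k → Fin N =>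
            (1 + ε) * ∑ i, mmax chat (P i) (hP i) <
              ∑ i, mmax (a ω) (P i) (hP i)).card : ℝ) ≤
      (C.card : ℝ) * Real.exp (-(ε ^ 2 * k) / 64) := by
  have hN' : (0 : ℝ) < (N : ℝ) ^ k := by positivity
  rw [one_div, inv_mul_le_iff₀ hN']
  have hsub : (Finset.univ.filter fun ω : Fin k → Fin N =>
      (1 + ε) * ∑ i, mmax chat (P i) (hP i) < ∑ i, mmax (a ω) (P i) (hP i)) ⊆
      C.biUnion fun c => Finset.univ.filter fun ω : Fin k → Fin N =>
        (1 + ε) * ∑ i, mmax chat (P i) (hP i) < ∑ i, mmax c (P i) (hP i) ∧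
        ∑ t, mmax c (P (ω t)) (hP (ω t)) ≤ ∑ t, mmax chat (P (ω t)) (hP (ω t)) := by
    intro ω hω
    simp only [Finset.mem_filter, Finset.mem_univ, true_and] at hω
    simp only [Finset.mem_biUnion, Finset.mem_filter, Finset.mem_univ, true_and]
    exact ⟨a ω, ha_mem ω, hω, ha_min ω chat hchat_mem⟩
  have hone : ∀ c ∈ C, ((Finset.univ.filter fun ω : Fin k → Fin N =>
        (1 + ε) * ∑ i, mmax chat (P i) (hP i) < ∑ i, mmax c (P i) (hP i) ∧
        ∑ t, mmax c (P (ω t)) (hP (ω t)) ≤ ∑ t, mmax chat (P (ω t)) (hP (ω t))).card : ℝ) ≤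
      (N : ℝ) ^ k * Real.exp (-(ε ^ 2 * k) / 64) := by
    intro c _
    by_cases hbad : (1 + ε) * ∑ i, mmax chat (P i) (hP i) < ∑ i, mmax c (P i) (hP i)
    · simp only [hbad, true_and]
      refine (card_empirical_le P hP ε hε0 hε1 c chat hbad k).trans ?_
      have : 0 ≤ ε ^ 2 * k := by positivity
      gcongr ?_ * Real.exp ?_
      linarith
    · simp only [hbad, false_and, Finset.filter_false, Finset.card_empty, Nat.cast_zero]
      positivity
  refine (Nat.cast_le.2 ((Finset.card_le_card hsub).trans Finset.card_biUnion_le)).trans ?_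
  rw [Nat.cast_sum]
  refine (Finset.sum_le_sum hone).trans (le_of_eq ?_)
  rw [Finset.sum_const, nsmul_eq_mul]
  ring
end

section
/- Let d ≥ 8 and set x = 2/d^{1/3}. Let K be a subset of the unit sphere in ℝ^d such that for all distinct p, q ∈ K with q ≠ −p one has √2·(1−x) ≤ ‖p − q‖ ≤ √2·(1+x). Let S ⊆ K be a finite nonempty set containing no antipodal pair (i.e., for no point is both p ∈ S and −p ∈ S). Let α be a real number with 1 < α < √2·(1−x), and let Σ : ℝ^d → ℝ be any function satisfying m(y,S)/α ≤ Σ(y) ≤ m(y,S) for all y ∈ ℝ^d. Then for every p ∈ K with −p ∈ K and −p ∉ S: p ∈ S if and only if Σ(−p) > √2·(1+x). -/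
/-- Distinguishing claim for the lower bound: for a nearly-orthonormal set `K`
on the unit sphere (pairwise distances in `[√2(1-x), √2(1+x)]` except for
antipodal pairs, `x = 2/d^{1/3}`), a set `S ⊆ K` without antipodal pairs, and
an `α`-approximate maximum-distance oracle `oracle` for `S` with
`1 < α < √2(1-x)`: for every `p ∈ K` with `-p ∈ K` and `-p ∉ S`, we have
`p ∈ S` iff `oracle(-p) > √2(1+x)`. -/
theorem lower_bound_distinguishing {d : ℕ} (hd : 8 ≤ d)
    (x : ℝ) (hx : x = 2 / (d : ℝ) ^ ((1 : ℝ) / 3))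
    (K : Set (EuclideanSpace ℝ (Fin d)))
    (hKsphere : ∀ p ∈ K, ‖p‖ = 1)
    (hKdist : ∀ p ∈ K, ∀ q ∈ K, p ≠ q → q ≠ -p →
      Real.sqrt 2 * (1 - x) ≤ ‖p - q‖ ∧ ‖p - q‖ ≤ Real.sqrt 2 * (1 + x))
    (S : Finset (EuclideanSpace ℝ (Fin d))) (hS : S.Nonempty)
    (hSK : (S : Set (EuclideanSpace ℝ (Fin d))) ⊆ K)
    (hSanti : ∀ p ∈ S, -p ∉ S)
    (α : ℝ) (hα1 : 1 < α) (hα2 : α < Real.sqrt 2 * (1 - x))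
    (oracle : EuclideanSpace ℝ (Fin d) → ℝ)
    (horacle : ∀ y, mmax y S hS / α ≤ oracle y ∧ oracle y ≤ mmax y S hS)
    (p : EuclideanSpace ℝ (Fin d)) (hp : p ∈ K) (hnp : -p ∈ K)
    (hnpS : -p ∉ S) :
    p ∈ S ↔ Real.sqrt 2 * (1 + x) < oracle (-p) := by
  have hx0 : 0 ≤ x := by rw [hx]; positivity
  have h2 : Real.sqrt 2 * Real.sqrt 2 = 2 := Real.mul_self_sqrt (by norm_num)
  have hs : 0 < Real.sqrt 2 := by positivity
  have hα0 : 0 < α := by linarith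
  constructor
  · intro hpS
    have hm : 2 ≤ mmax (-p) S hS := by
      have h := Finset.le_sup' (fun q => ‖-p - q‖) hpS
      have hn : ‖-p - p‖ = 2 := by
        have e : -p - p = (-2 : ℝ) • p := by module
        rw [e, norm_smul, hKsphere p hp]
        norm_num
      rw [← hn]
      exact h
    refine lt_of_lt_of_le ?_ (horacle (-p)).1
    rw [lt_div_iff₀ hα0]
    calc Real.sqrt 2 * (1 + x) * α
        < Real.sqrt 2 * (1 + x) * (Real.sqrt 2 * (1 - x)) := by gcongr
      _ = 2 * (1 - x ^ 2) := by linear_combination (1 - x ^ 2) * h2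
      _ ≤ 2 := by nlinarith [sq_nonneg x]
      _ ≤ mmax (-p) S hS := hm
  · intro h
    by_contra hpS
    have hm : mmax (-p) S hS ≤ Real.sqrt 2 * (1 + x) := by
      refine Finset.sup'_le hS _ fun q hq => ?_
      refine (hKdist (-p) hnp q (hSK hq) ?_ ?_).2
      · rintro rfl
        exact hnpS hq
      · rw [neg_neg]
        rintro rfl
        exact hpS hq
    linarith [(horacle (-p)).2]
end
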